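/- Let Z = {(x,y,z) ∈ ℝ³ : x² + y² = 1} be the cylinder and f : Z → ℝ a smooth proper surjective function with f(x,y,z) → +∞ as z → +∞ and f(x,y,z) → −∞ as z → −∞ uniformly. Then for any regular value t ∈ ℝ, the level set f⁻¹(t) has a connected component which is a simple closed curve whose homotopy class generates π₁(Z) ≅ ℤ. -/

import Mathlib

open Set Filter Topology

namespace CylPf

/-- Continuous logarithm of a non-vanishing function on a simply connected space. -/
lemma exists_log {X : Type*} [TopologicalSpace X] [SimplyConnectedSpace X]
    [LocallyPathConnectedSpace X] (g : C(X, ℂ)) (hg : ∀ x, g x ≠ 0) :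
    ∃ f : C(X, ℂ), ∀ x, Complex.exp (f x) = g x := by
  obtain ⟨x₀⟩ : Nonempty X := inferInstance
  rcases Complex.isCoveringMapOn_exp.existsUnique_continuousMap_lifts
    g (Complex.exp_log (hg x₀)) (fun x ↦ hg x) with ⟨f, ⟨-, hf⟩, -⟩
  exact ⟨f, fun x => congrFun hf x⟩

/-- Global existence for a bounded Lipschitz vector field. -/
lemma exists_global {E : Type*} [NormedAddCommGroup E] [NormedSpace ℝ E] [CompleteSpace E]
    {v : E → E} {K L : NNReal} (hK : LipschitzWith K v) (hL : ∀ x, ‖v x‖ ≤ L) (x : E) :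
    ∃ c : ℝ → E, c 0 = x ∧ ∀ s, HasDerivAt c (v (c s)) s := by
  have key : ∀ T : ℝ, ∃ c : ℝ → E, 0 < T → (c 0 = x ∧ ∀ s ∈ Ioo (-T) T, HasDerivAt c (v (c s)) s) := by
    intro T
    by_cases hT : 0 < T
    swap
    · exact ⟨0, fun h => absurd h hT⟩
    have h0 : (0:ℝ) ∈ Icc (-T) T := ⟨by linarith, hT.le⟩
    have hpl : IsPicardLindelof (fun _ ↦ v) (⟨0, h0⟩ : Icc (-T) T) x (L * ⟨T, hT.le⟩) 0 L K := by
      apply IsPicardLindelof.of_time_independent (fun x _ => hL x) hK.lipschitzOnWith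
      simp
      exact mul_le_mul_of_nonneg_left (le_refl T) L.2
    obtain ⟨c, h1, h2⟩ := hpl.exists_eq_forall_mem_Icc_hasDerivWithinAt₀
    exact ⟨c, fun _ => ⟨h1, fun s hs => (h2 s (Ioo_subset_Icc_self hs)).hasDerivAt (Icc_mem_nhds hs.1 hs.2)⟩⟩
  choose γ hγ using key
  have hpos : ∀ s : ℝ, 0 < |s| + 1 := fun s => by positivity
  have hle : ∀ a b : ℝ, 0 < a → a ≤ b → EqOn (γ a) (γ b) (Ioo (-a) a) := by
    intro a b ha hab
    refine ODE_solution_unique_of_mem_Ioo (v := fun _ => v) (s := fun _ => univ) (K := K) (t₀ := 0)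
      (fun _ _ => hK.lipschitzOnWith) ⟨by linarith, ha⟩
      (fun s hs => ⟨(hγ a ha).2 s hs, trivial⟩)
      (fun s hs => ⟨(hγ b (ha.trans_le hab)).2 s ⟨by linarith [hs.1], by linarith [hs.2]⟩, trivial⟩) ?_
    rw [(hγ a ha).1, (hγ b (ha.trans_le hab)).1]
  refine ⟨fun s => γ (|s| + 1) s, (hγ _ (hpos 0)).1, fun s => ?_⟩
  have hs : s ∈ Ioo (-(|s|+1)) (|s|+1) := abs_lt.mp (lt_add_one _)
  refine ((hγ _ (hpos s)).2 s hs).congr_of_eventuallyEq ?_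
  filter_upwards [Ioo_mem_nhds hs.1 hs.2] with u hu
  have hu' : |u| < |s| + 1 := abs_lt.mpr hu
  rcases le_total (|u|+1) (|s|+1) with h | h
  · exact hle _ _ (hpos u) h (abs_lt.mp (lt_add_one _))
  · exact (hle _ _ (hpos s) h hu).symm

/-- Global uniqueness. -/
lemma unique_global {E : Type*} [NormedAddCommGroup E] [NormedSpace ℝ E]
    {v : E → E} {K : NNReal} (hK : LipschitzWith K v) {c d : ℝ → E}
    (hc : ∀ s, HasDerivAt c (v (c s)) s) (hd : ∀ s, HasDerivAt d (v (d s)) s)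
    (s₀ : ℝ) (h : c s₀ = d s₀) : c = d :=
  ODE_solution_unique_univ (v := fun _ => v) (s := fun _ => univ) (K := K)
    (fun _ => hK.lipschitzOnWith) (fun s => ⟨hc s, trivial⟩) (fun s => ⟨hd s, trivial⟩) h

/-- The deck translation vectors. -/
noncomputable def tr (k : ℤ) : ℝ × ℝ := (2 * Real.pi * k, 0)

lemma tr_add (a b : ℤ) : tr (a + b) = tr a + tr b := by
  simp [tr, mul_add]
lemma tr_zero : tr 0 = 0 := by simp [tr]
lemma tr_neg (a : ℤ) : tr (-a) = -tr a := by simp [tr]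
lemma tr_sub (a b : ℤ) : tr (a - b) = tr a - tr b := by simp [tr, mul_sub]
lemma tr_inj {a b : ℤ} (h : tr a = tr b) : a = b := by
  have := congrArg Prod.fst h
  simp only [tr] at this
  have h2 := mul_left_cancel₀ (by positivity) this
  exact_mod_cast h2

lemma stay {h : ℝ → ℝ} (hc : Continuous h) (hs : ∀ x, 0 ≤ Real.sin (h x)) {x₀ : ℝ}
    (h0 : h x₀ ∈ Icc 0 Real.pi) (x : ℝ) : h x ∈ Icc 0 Real.pi := by
  have e : h ⁻¹' (Icc 0 Real.pi) = h ⁻¹' (Ioo (-Real.pi) (2 * Real.pi)) := by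
    ext y
    simp only [mem_preimage, mem_Icc, mem_Ioo]
    have := Real.pi_pos
    constructor
    · intro h; constructor <;> linarith [h.1, h.2]
    · rintro ⟨h1, h2⟩
      have := hs y
      constructor
      · by_contra hn
        linarith [Real.sin_neg_of_neg_of_neg_pi_lt (not_le.mp hn) h1]
      · by_contra hn
        push Not at hn
        have := Real.sin_pos_of_pos_of_lt_pi (x := h y - Real.pi) (by linarith) (by linarith)
        rw [Real.sin_sub_pi] at this
        linarith
  have hcl : IsClopen (h ⁻¹' (Icc 0 Real.pi)) :=
    ⟨isClosed_Icc.preimage hc, e ▸ isOpen_Ioo.preimage hc⟩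
  have := hcl.eq_univ ⟨x₀, h0⟩
  show x ∈ h ⁻¹' (Icc 0 Real.pi)
  rw [this]
  trivial

lemma ang_zero {a : ℝ} (h : a ∈ Icc 0 Real.pi) (hs : Real.sin a = 0) (hc : 0 < Real.cos a) :
    a = 0 := by
  rcases h.1.eq_or_lt with h1 | h1
  · exact h1.symm
  rcases h.2.eq_or_lt with h2 | h2
  · rw [h2] at hc; simp at hc; linarith
  · linarith [Real.sin_pos_of_pos_of_lt_pi h1 h2]

lemma ang_pi {a : ℝ} (h : a ∈ Icc 0 Real.pi) (hs : Real.sin a = 0) (hc : Real.cos a < 0) :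
    a = Real.pi := by
  rcases h.1.eq_or_lt with h1 | h1
  · rw [← h1] at hc; simp at hc; linarith
  rcases h.2.eq_or_lt with h2 | h2
  · exact h2
  · linarith [Real.sin_pos_of_pos_of_lt_pi h1 h2]

/-- A Hopf-type chord lemma. -/
lemma hopf {c : ℝ → ℝ × ℝ} (hc : Continuous c) {T : ℝ} (hT : 0 < T) {w : ℤ} (hw : 1 ≤ w)
    (hper : ∀ s, c (s + T) = c s + tr w) : ∃ s u, c s = c u + tr 1 := by
  rcases hw.eq_or_lt with hw1 | hw2
  · exact ⟨T, 0, by have := hper 0; rw [zero_add] at this; rw [this, hw1]⟩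
  by_contra hne
  push Not at hne
  obtain ⟨s₀, hs₀⟩ : ∃ s₀, ∀ s, (c s).2 ≤ (c s₀).2 := by
    have hp : Function.Periodic (fun s => (c s).2) T := fun s => by simp [hper, tr]
    obtain ⟨m, hm, hm'⟩ := isCompact_Icc.exists_isMaxOn (nonempty_Icc.mpr hT.le)
      (f := fun s => (c s).2) (by fun_prop : ContinuousOn _ (Icc 0 T))
    refine ⟨m, fun s => ?_⟩
    obtain ⟨y, hy, hy'⟩ := hp.exists_mem_Ico₀ hT s
    rw [show (c s).2 = (c y).2 from hy']
    exact hm' (Ico_subset_Icc_self hy)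
  let D : C(ℝ × ℝ, ℂ) := ⟨fun p => ⟨(c p.1).1 - (c p.2).1 - 2 * Real.pi, (c p.1).2 - (c p.2).2⟩, by
    have : (fun p : ℝ × ℝ => (⟨(c p.1).1 - (c p.2).1 - 2 * Real.pi, (c p.1).2 - (c p.2).2⟩ : ℂ)) =
      fun p => Complex.equivRealProdCLM.symm ((c p.1).1 - (c p.2).1 - 2 * Real.pi, (c p.1).2 - (c p.2).2) := rfl
    rw [this]
    fun_prop⟩
  obtain ⟨l, hl⟩ := exists_log D (by
    intro p hp
    apply hne p.1 p.2
    have h1 := congrArg Complex.re hp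
    have h2 := congrArg Complex.im hp
    simp [D] at h1 h2
    ext
    · simp [tr]; linarith
    · simp [tr]; linarith)
  have hre : ∀ s u, Real.exp (l (s,u)).re * Real.cos (l (s,u)).im = (c s).1 - (c u).1 - 2 * Real.pi := by
    intro s u
    rw [← Complex.exp_re, hl]; rfl
  have him : ∀ s u, Real.exp (l (s,u)).re * Real.sin (l (s,u)).im = (c s).2 - (c u).2 := by
    intro s u
    rw [← Complex.exp_im, hl]; rfl
  have hpi := Real.pi_pos
  obtain ⟨k, hk⟩ : ∃ k : ℤ, (l (s₀,s₀)).im = Real.pi + k * (2 * Real.pi) := by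
    have h1 := hre s₀ s₀
    have h2 := him s₀ s₀
    simp only [sub_self, mul_eq_zero, Real.exp_ne_zero, false_or] at h2
    have h3 : Real.cos (l (s₀,s₀)).im < 0 := by
      by_contra hn
      have := mul_nonneg (Real.exp_pos (l (s₀,s₀)).re).le (not_lt.mp hn)
      linarith
    have h4 : Real.cos ((l (s₀,s₀)).im - Real.pi) = 1 := by
      rw [Real.cos_sub_pi]
      nlinarith [Real.sin_sq_add_cos_sq (l (s₀,s₀)).im]
    obtain ⟨k, hk⟩ := (Real.cos_eq_one_iff _).mp h4
    exact ⟨k, by linarith⟩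
  let a : ℝ → ℝ → ℝ := fun s u => (l (s,u)).im - k * (2 * Real.pi)
  have hac : Continuous (fun p : ℝ × ℝ => a p.1 p.2) := by
    show Continuous (fun p : ℝ × ℝ => (l (p.1,p.2)).im - k * (2 * Real.pi))
    fun_prop
  have hcos : ∀ s u, ∃ r > 0, r * Real.cos (a s u) = (c s).1 - (c u).1 - 2 * Real.pi ∧
      r * Real.sin (a s u) = (c s).2 - (c u).2 := by
    intro s u
    refine ⟨_, Real.exp_pos (l (s,u)).re, ?_, ?_⟩
    · rw [← hre]; simp [a, Real.cos_sub_int_mul_two_pi]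
    · rw [← him]; simp [a, Real.sin_sub_int_mul_two_pi]
  have sinnn : ∀ s u, (c u).2 ≤ (c s).2 → 0 ≤ Real.sin (a s u) := by
    intro s u h
    obtain ⟨r, hr, h1, h2⟩ := hcos s u
    by_contra hn
    nlinarith
  have sinnp : ∀ s u, (c s).2 ≤ (c u).2 → Real.sin (a s u) ≤ 0 := by
    intro s u h
    obtain ⟨r, hr, h1, h2⟩ := hcos s u
    by_contra hn
    nlinarith
  have cosp : ∀ s u, (c u).1 + 2 * Real.pi < (c s).1 → 0 < Real.cos (a s u) := by
    intro s u h
    obtain ⟨r, hr, h1, h2⟩ := hcos s u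
    by_contra hn
    nlinarith
  have cosn : ∀ s u, (c s).1 < (c u).1 + 2 * Real.pi → Real.cos (a s u) < 0 := by
    intro s u h
    obtain ⟨r, hr, h1, h2⟩ := hcos s u
    by_contra hn
    nlinarith
  have haa : a s₀ s₀ = Real.pi := by simp [a, hk]
  have hm := hper (s₀ - T)
  rw [sub_add_cancel] at hm
  have hm1 : (c s₀).1 = (c (s₀ - T)).1 + 2 * Real.pi * w := by rw [hm]; simp [tr]
  have hm2 : (c s₀).2 = (c (s₀ - T)).2 := by rw [hm]; simp [tr]
  have hwr : (2:ℝ) ≤ w := by exact_mod_cast hw2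
  set s₁ := s₀ - T
  have hs1 : ∀ s, (c s).2 ≤ (c s₁).2 := fun s => hm2 ▸ hs₀ s
  have sin0 : ∀ s u, (c s).2 = (c u).2 → Real.sin (a s u) = 0 := fun s u h =>
    le_antisymm (sinnp s u h.le) (sinnn s u h.ge)
  -- first route
  have A1 : a s₀ s₁ = 0 := by
    refine ang_zero (stay (h := fun u => a s₀ u) (by fun_prop) (fun u => sinnn _ _ (hs₀ u))
      (x₀ := s₀) ⟨by rw [haa]; linarith, by rw [haa]⟩ s₁) (sin0 _ _ hm2) (cosp _ _ ?_)
    nlinarith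
  have A2 : -a s₁ s₁ = Real.pi := by
    refine ang_pi (stay (h := fun s => -a s s₁) (by fun_prop)
      (fun s => by rw [Real.sin_neg]; linarith [sinnp s s₁ (hs1 s)])
      (x₀ := s₀) ⟨by rw [A1]; simp, by rw [A1]; simpa using hpi.le⟩ s₁)
      (by rw [Real.sin_neg, sin0 _ _ rfl, neg_zero]) ?_
    rw [Real.cos_neg]
    exact cosn _ _ (by linarith)
  have B1 : a s₁ s₀ - Real.pi = 0 := by
    refine ang_zero (stay (h := fun s => a s s₀ - Real.pi) (by fun_prop)
      (fun s => by rw [Real.sin_sub_pi]; linarith [sinnp s s₀ (hs₀ s)])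
      (x₀ := s₀) ⟨by rw [haa]; simp, by rw [haa]; simpa using hpi.le⟩ s₁)
      (by rw [Real.sin_sub_pi, sin0 _ _ hm2.symm, neg_zero]) ?_
    rw [Real.cos_sub_pi]
    linarith [cosn s₁ s₀ (by nlinarith)]
  have B2 := stay (h := fun u => a s₁ u) (by fun_prop) (fun u => sinnn _ _ (hs1 u))
      (x₀ := s₀) ⟨by linarith, by linarith⟩ s₁
  linarith [B2.1]

end CylPf
open Set Filter Topology

namespace CylPf

/-- The cylinder. -/
abbrev Z := {p : ℝ × ℝ × ℝ // p.1 ^ 2 + p.2.1 ^ 2 = 1}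

/-- The universal covering of the cylinder. -/
noncomputable def pr (q : ℝ × ℝ) : Z :=
  ⟨(Real.cos q.1, Real.sin q.1, q.2), by simp⟩

lemma continuous_pr : Continuous pr := by
  unfold pr
  fun_prop

/-- The cylinder as a subset of circle times line. -/
noncomputable def jj (z : Z) : Circle × ℝ :=
  (⟨⟨z.1.1, z.1.2.1⟩, by
    rw [Submonoid.unitSphere, Submonoid.mem_mk, Subsemigroup.mem_mk, mem_sphere_zero_iff_norm, ← sq_eq_sq₀ (norm_nonneg _) zero_le_one, Complex.sq_norm, Complex.normSq_mk]
    have := z.2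
    nlinarith⟩, z.1.2.2)

lemma continuous_jj : Continuous jj := by
  unfold jj
  refine Continuous.prodMk ?_ (by fun_prop)
  refine Continuous.subtype_mk ?_ _
  have : (fun z : Z => (⟨z.1.1, z.1.2.1⟩ : ℂ)) =
      fun z => Complex.equivRealProdCLM.symm (z.1.1, z.1.2.1) := rfl
  rw [this]
  fun_prop

lemma jj_inj : Function.Injective jj := by
  intro a b h
  have h1 := congrArg (fun z : Circle × ℝ => (z.1 : ℂ).re) h
  have h2 := congrArg (fun z : Circle × ℝ => (z.1 : ℂ).im) h
  have h3 := congrArg (fun z : Circle × ℝ => z.2) h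
  apply Subtype.ext
  exact Prod.ext h1 (Prod.ext h2 h3)

lemma jj_pr (q : ℝ × ℝ) : jj (pr q) = (Circle.exp q.1, q.2) := by
  refine Prod.ext ?_ rfl
  apply Circle.ext
  rw [Circle.coe_exp]
  apply Complex.ext
  · rw [Complex.exp_ofReal_mul_I_re]; rfl
  · rw [Complex.exp_ofReal_mul_I_im]; rfl

lemma pr_eq_iff {p q : ℝ × ℝ} : pr p = pr q ↔ ∃ k : ℤ, p = q + tr k := by
  rw [← jj_inj.eq_iff, jj_pr, jj_pr, Prod.ext_iff]
  simp only [Circle.exp_eq_exp]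
  constructor
  · rintro ⟨⟨k, hk⟩, h⟩
    exact ⟨k, Prod.ext (by simp [tr, hk]; ring) (by simp [tr, h])⟩
  · rintro ⟨k, rfl⟩
    exact ⟨⟨k, by simp [tr]; ring⟩, by simp [tr]⟩

lemma pr_tr (p : ℝ × ℝ) (k : ℤ) : pr (p + tr k) = pr p := pr_eq_iff.mpr ⟨k, rfl⟩

lemma isOpenMap_pr : IsOpenMap pr := by
  intro U hU
  have h : IsOpenMap (Prod.map Circle.exp id : ℝ × ℝ → Circle × ℝ) :=
    Circle.isCoveringMap_exp.isLocalHomeomorph.isOpenMap.prodMap IsOpenMap.id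
  have e : pr '' U = jj ⁻¹' ((Prod.map Circle.exp id : ℝ × ℝ → Circle × ℝ) '' U) := by
    ext z
    constructor
    · rintro ⟨u, hu, rfl⟩
      exact ⟨u, hu, (jj_pr u).symm⟩
    · rintro ⟨u, hu, h⟩
      refine ⟨u, hu, jj_inj ?_⟩
      rw [← h, jj_pr]; rfl
  rw [e]
  exact (h U hU).preimage continuous_jj

lemma pr_surj : Function.Surjective pr := by
  intro z
  obtain ⟨x, hx⟩ := Circle.exp_surjective (jj z).1
  exact ⟨(x, z.1.2.2), jj_inj (by rw [jj_pr, hx]; rfl)⟩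

lemma nhds_pr (q : ℝ × ℝ) : 𝓝 (pr q) = map pr (𝓝 q) :=
  le_antisymm (isOpenMap_pr.nhds_le q) continuous_pr.continuousAt

lemma lift_path (δ : C(unitInterval, Z)) (q : ℝ × ℝ) (hq : δ 0 = pr q) :
    ∃ d : C(unitInterval, ℝ × ℝ), d 0 = q ∧ ∀ s, pr (d s) = δ s := by
  obtain ⟨θ, h1, h2⟩ := Circle.isCoveringMap_exp.exists_path_lifts
    ⟨fun s => (jj (δ s)).1, continuous_fst.comp (continuous_jj.comp δ.continuous)⟩ q.1
    (by show (jj (δ 0)).1 = _; rw [hq, jj_pr])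
  refine ⟨⟨fun s => (θ s, (δ s).1.2.2), by fun_prop⟩, ?_, ?_⟩
  · refine Prod.ext h2 ?_
    show (δ 0).1.2.2 = _
    rw [hq]; rfl
  · intro s
    apply jj_inj
    rw [jj_pr]
    exact Prod.ext (congrFun h1 s) rfl

lemma homotopic_of_lift {x : Z} (γ δ : Path x x) (d e : C(unitInterval, ℝ × ℝ))
    (hd : ∀ s, pr (d s) = γ s) (he : ∀ s, pr (e s) = δ s) (h0 : d 0 = e 0) (h1 : d 1 = e 1) :
    γ.Homotopic δ := by
  refine ⟨⟨⟨⟨fun rs => pr ((1 - (rs.1 : ℝ)) • d rs.2 + (rs.1 : ℝ) • e rs.2), ?_⟩, ?_, ?_⟩, ?_⟩⟩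
  · have := continuous_pr
    fun_prop
  · intro s
    simp [hd]
  · intro s
    simp [he]
  · intro r s hs
    have hh : ∀ v : ℝ × ℝ, (1 - (r : ℝ)) • v + (r : ℝ) • v = v := fun v => by
      rw [← add_smul]; simp
    rcases hs with rfl | hs
    · simp only [ContinuousMap.coe_mk]
      rw [← h0, hh, hd]; simp
    · rw [mem_singleton_iff] at hs
      subst hs
      simp only [ContinuousMap.coe_mk]
      rw [← h1, hh, hd]; simp

/-- standard path upstairs -/
noncomputable def up (q : ℝ × ℝ) (k : ℤ) : Path q (q + tr k) where
  toFun s := q + (s : ℝ) • tr k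
  continuous_toFun := by fun_prop
  source' := by simp
  target' := by simp

/-- standard loop downstairs -/
noncomputable def dn (q : ℝ × ℝ) (k : ℤ) : Path (pr q) (pr q) :=
  ((up q k).map continuous_pr).cast rfl (pr_tr q k).symm

lemma dn_add (q : ℝ × ℝ) (m n : ℤ) : ((dn q m).trans (dn q n)).Homotopic (dn q (m + n)) := by
  let u2 : Path (q + tr m) (q + tr (m + n)) :=
    (up (q + tr m) n).cast rfl (by rw [tr_add, add_assoc])
  refine homotopic_of_lift _ _ ((up q m).trans u2).toContinuousMap (up q (m+n)).toContinuousMap ?_ ?_ ?_ ?_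
  · intro s
    simp only [Path.trans_apply, Path.coe_toContinuousMap]
    split_ifs with h
    · rfl
    · show pr (q + tr m + _) = pr (q + _)
      rw [add_right_comm, pr_tr]
  · intro s; rfl
  · simp
  · simp

lemma gen (q : ℝ × ℝ) (γ : Path (pr q) (pr q)) (d : C(unitInterval, ℝ × ℝ))
    (hd : ∀ s, pr (d s) = γ s) (w : ℤ) (h0 : d 0 = q) (h1 : d 1 = q + tr w) (hw : w * w = 1) :
    Subgroup.zpowers
        (FundamentalGroup.fromPath
          (X := TopCat.of {p : ℝ × ℝ × ℝ // p.1 ^ 2 + p.2.1 ^ 2 = 1}) ⟦γ⟧) = ⊤ := by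
  let P : Multiplicative ℤ →* FundamentalGroup Z (pr q) := MonoidHom.mk'
    (fun m => FundamentalGroup.fromPath ⟦dn q m.toAdd⟧) (by
      intro a b
      rw [FundamentalGroup.mul_def]
      show _ = (⟦(dn q b.toAdd).trans (dn q a.toAdd)⟧ : Path.Homotopic.Quotient _ _)
      refine Quotient.sound ?_
      have := dn_add q b.toAdd a.toAdd
      rw [toAdd_mul, add_comm]
      exact this.symm)
  have hP : ∀ (δ : Path (pr q) (pr q)) (e : C(unitInterval, ℝ × ℝ)) (k : ℤ)
    (_ : ∀ s, pr (e s) = δ s) (_ : e 0 = q) (_ : e 1 = q + tr k),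
      P (Multiplicative.ofAdd k) = FundamentalGroup.fromPath ⟦δ⟧ := by
    intro δ e k he h0 h1
    refine Quotient.sound ?_
    refine homotopic_of_lift _ _ (up q k).toContinuousMap e (fun s => rfl) he ?_ ?_
    · simp [h0]
    · simp [h1]
  rw [eq_top_iff]
  intro x _
  induction x using Quotient.inductionOn with
  | h δ =>
    obtain ⟨e, he0, he⟩ := lift_path δ.toContinuousMap q (by simp)
    obtain ⟨k, hk⟩ : ∃ k, e 1 = q + tr k := pr_eq_iff.mp (by rw [he]; simp)
    have e1 := hP γ d w hd h0 h1
    have e2 := hP δ e k he he0 hk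
    refine Subgroup.mem_zpowers_iff.mpr ⟨w * k, ?_⟩
    refine Eq.trans ?_ e2
    refine Eq.trans (congrArg (· ^ (w * k)) e1.symm) ?_
    show P (Multiplicative.ofAdd w) ^ (w * k) = _
    rw [← map_zpow, ← ofAdd_zsmul]
    congr 2
    rw [smul_eq_mul, mul_right_comm, hw, one_mul]

end CylPf
open Set Filter Topology

namespace CylPf

/-- Abstract properties of the Hamiltonian flow on the level set `S`. -/
structure FlowData (S : Set (ℝ × ℝ)) (φ : ℝ × ℝ → ℝ → ℝ × ℝ) : Prop where
  zero : ∀ p, φ p 0 = p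
  mem : ∀ p ∈ S, ∀ s, φ p s ∈ S
  cont : ∀ p, Continuous (φ p)
  add : ∀ p a s, φ (φ p a) s = φ p (a + s)
  equi : ∀ p k s, φ (p + tr k) s = φ p s + tr k
  box : ∀ q ∈ S, ∀ ε > 0, ∀ᶠ q' in 𝓝 q, q' ∈ S → ∃ s, |s| < ε ∧ q' = φ q s
  inj : ∀ q ∈ S, ∃ ε > 0, ∀ s, 0 < s → s < ε → ∀ k, φ q s ≠ q + tr k

lemma exists_tr (p : ℝ × ℝ) : ∃ k : ℤ, (p + tr k).1 ∈ Icc 0 (2 * Real.pi) ∧ (p + tr k).2 = p.2 := by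
  have hp : 0 < 2 * Real.pi := by positivity
  refine ⟨- toIcoDiv hp 0 p.1, ?_, by simp [tr]⟩
  have := toIcoMod_mem_Ico hp 0 p.1
  rw [zero_add] at this
  have e : (p + tr (-toIcoDiv hp 0 p.1)).1 = toIcoMod hp 0 p.1 := by
    have h := self_sub_toIcoDiv_zsmul hp 0 p.1
    rw [zsmul_eq_mul] at h
    rw [← h]
    simp only [tr, Prod.fst_add]
    push_cast
    ring
  rw [e]
  exact Ico_subset_Icc_self this

lemma bound_periodic {E : Type*} [NormedAddCommGroup E] {h : ℝ × ℝ → E} (hc : Continuous h)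
    (hp : ∀ p k, h (p + tr k) = h p) (M : ℝ) : ∃ C : NNReal, ∀ p : ℝ × ℝ, |p.2| ≤ M → ‖h p‖ ≤ C := by
  obtain ⟨C, hC⟩ := ((isCompact_Icc (a := (0:ℝ)) (b := 2 * Real.pi)).prod
    (isCompact_Icc (a := -M) (b := M))).exists_bound_of_continuousOn hc.continuousOn
  refine ⟨⟨max C 0, le_max_right _ _⟩, fun p hpM => ?_⟩
  obtain ⟨k, h1, h2⟩ := exists_tr p
  rw [← hp p k]
  refine (hC (p + tr k) ⟨h1, ?_⟩).trans (le_max_left _ _)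
  rw [h2]
  exact abs_le.mp hpM

/-- Hamiltonian vector field -/
noncomputable def ham (G : ℝ × ℝ → ℝ) (p : ℝ × ℝ) : ℝ × ℝ :=
  (-(fderiv ℝ G p (0, 1)), fderiv ℝ G p (1, 0))

/-- clamping the height -/
noncomputable def cl (M : ℝ) (p : ℝ × ℝ) : ℝ × ℝ := (p.1, max (-M) (min M p.2))

lemma fderiv_apply' (G : ℝ × ℝ → ℝ) (p v : ℝ × ℝ) :
    fderiv ℝ G p v = v.1 * fderiv ℝ G p (1, 0) + v.2 * fderiv ℝ G p (0, 1) := by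
  have : v = v.1 • ((1, 0) : ℝ × ℝ) + v.2 • ((0, 1) : ℝ × ℝ) := by ext <;> simp
  conv_lhs => rw [this]
  rw [map_add, map_smul, map_smul]
  simp

lemma flow_box {G : ℝ × ℝ → ℝ} (hG : ContDiff ℝ 2 G) {c : ℝ → ℝ × ℝ} {V : ℝ × ℝ → ℝ × ℝ}
    (hV : Continuous V) (hc : ∀ s, HasDerivAt c (V (c s)) s) {t : ℝ} (hGc : ∀ s, G (c s) = t)
    (hV0 : V (c 0) = ham G (c 0)) (hreg : fderiv ℝ G (c 0) ≠ 0) {ε : ℝ} (hε : 0 < ε) :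
    ∀ᶠ q' in 𝓝 (c 0), G q' = t → ∃ s, |s| < ε ∧ q' = c s := by
  set q := c 0 with hq
  set a := fderiv ℝ G q (1, 0) with ha
  set b := fderiv ℝ G q (0, 1) with hb
  have hab : 0 < a ^ 2 + b ^ 2 := by
    by_contra hn
    have h1 : a = 0 := by nlinarith [sq_nonneg a, sq_nonneg b]
    have h2 : b = 0 := by nlinarith [sq_nonneg a, sq_nonneg b]
    apply hreg
    ext <;> simp [← ha, ← hb, h1, h2]
  set n : ℝ × ℝ := (a, b) with hn
  have hcc : Continuous c := continuous_iff_continuousAt.mpr fun s => (hc s).continuousAt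
  have hstr : HasStrictDerivAt c (V q) 0 :=
    hasStrictDerivAt_of_hasDerivAt_of_continuousAt (Eventually.of_forall hc)
      (hV.comp hcc).continuousAt
  let Ψ : ℝ × ℝ → ℝ × ℝ := fun x => c x.1 + x.2 • n
  have hΨ : HasStrictFDerivAt Ψ ((ContinuousLinearMap.toSpanSingleton ℝ (V q)).comp
      (ContinuousLinearMap.fst ℝ ℝ ℝ) + (ContinuousLinearMap.snd ℝ ℝ ℝ).smulRight n) ((0:ℝ), (0:ℝ)) := by
    refine HasStrictFDerivAt.add ?_ ?_
    · exact HasStrictFDerivAt.comp (g := c) ((0:ℝ), (0:ℝ)) hstr.hasStrictFDerivAt hasStrictFDerivAt_fst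
    · exact ((ContinuousLinearMap.snd ℝ ℝ ℝ).smulRight n).hasStrictFDerivAt
  have hmap : map Ψ (𝓝 ((0:ℝ), (0:ℝ))) = 𝓝 q := by
    have := hΨ.map_nhds_eq_of_surj (by
      rw [LinearMap.range_eq_top]
      intro v
      refine ⟨((-b * v.1 + a * v.2) / (a^2+b^2), (a * v.1 + b * v.2)/(a^2+b^2)), ?_⟩
      simp [hV0, ham, ← ha, ← hb, hn]
      ext
      · simp; field_simp; ring
      · simp; field_simp; ring)
    rw [this]
    simp [Ψ, hq]
  rw [← hmap, eventually_map]
  have hGs : HasStrictFDerivAt G (fderiv ℝ G q) q :=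
    hG.contDiffAt.hasStrictFDerivAt (by norm_num)
  have hn0 : n ≠ 0 := by
    intro h
    have h1 : a = 0 := congrArg Prod.fst h
    have h2 : b = 0 := congrArg Prod.snd h
    simp [h1, h2] at hab
  have hnn : 0 < ‖n‖ := norm_pos_iff.mpr hn0
  have hlo := hGs.isLittleO.def (c := (a^2+b^2) / (2 * ‖n‖)) (by positivity)
  have htd : Tendsto (fun x : ℝ × ℝ => (Ψ x, c x.1)) (𝓝 ((0:ℝ),(0:ℝ))) (𝓝 (q, q)) := by
    have : Continuous (fun x : ℝ × ℝ => (Ψ x, c x.1)) := by fun_prop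
    have := this.tendsto ((0:ℝ),(0:ℝ))
    simpa [Ψ] using this
  have hsm : ∀ᶠ x : ℝ × ℝ in 𝓝 ((0:ℝ),(0:ℝ)), |x.1| < ε := by
    have : Continuous (fun x : ℝ × ℝ => |x.1|) := by fun_prop
    exact this.continuousAt.eventually_lt continuousAt_const (by simpa using hε)
  filter_upwards [htd.eventually hlo, hsm] with x hx hx1 hGx
  refine ⟨x.1, hx1, ?_⟩
  have hr : x.2 = 0 := by
    simp only [hGx, hGc, Ψ, add_sub_cancel_left, sub_self, zero_sub, norm_neg, map_smul] at hx
    have e : fderiv ℝ G q n = a^2+b^2 := by rw [fderiv_apply']; simp [hn, ← ha, ← hb]; ring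
    rw [e, norm_smul, norm_smul, Real.norm_of_nonneg hab.le] at hx
    have e2 : (a^2+b^2) / (2 * ‖n‖) * (‖x.2‖ * ‖n‖) = ‖x.2‖ * ((a^2+b^2)/2) := by
      field_simp
    rw [e2] at hx
    by_contra h0
    have := norm_pos_iff.mpr h0
    nlinarith
  simp [Ψ, hr]

lemma exists_flow {G : ℝ × ℝ → ℝ} (hG : ContDiff ℝ 2 G) (hper : ∀ p k, G (p + tr k) = G p)
    {t M : ℝ} (hM : ∀ p, G p = t → |p.2| < M) (hreg : ∀ p, G p = t → fderiv ℝ G p ≠ 0) :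
    ∃ φ, FlowData {p | G p = t} φ := by
  wlog hM0 : 0 ≤ M generalizing M
  · exact this (M := |M|) (fun p hp => (hM p hp).trans_le (le_abs_self _)) (abs_nonneg _)
  have hdG : ContDiff ℝ 1 (fderiv ℝ G) := hG.fderiv_right (by norm_num)
  have hX : ContDiff ℝ 1 (ham G) := by
    unfold ham
    fun_prop
  have hdper : ∀ p k, fderiv ℝ G (p + tr k) = fderiv ℝ G p := by
    intro p k
    rw [← fderiv_comp_add_right]
    congr 1
    ext p; exact hper p k
  have hXper : ∀ p k, ham G (p + tr k) = ham G p := by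
    intro p k; simp [ham, hdper]
  have hdXper : ∀ p k, fderiv ℝ (ham G) (p + tr k) = fderiv ℝ (ham G) p := by
    intro p k
    rw [← fderiv_comp_add_right]
    congr 1
    ext1 p; exact hXper p k
  obtain ⟨B, hB⟩ := bound_periodic hX.continuous hXper M
  obtain ⟨K, hK⟩ := bound_periodic (hX.continuous_fderiv (by norm_num)) hdXper M
  have hcl : ∀ p, |(cl M p).2| ≤ M := by
    intro p
    simp only [cl]
    rw [abs_le]
    exact ⟨le_max_left _ _, max_le (by linarith) (min_le_left _ _)⟩
  have hcleq : ∀ p : ℝ × ℝ, |p.2| < M → cl M p = p := by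
    intro p hp
    rw [abs_lt] at hp
    simp [cl, min_eq_right hp.2.le, max_eq_right hp.1.le]
  have hclL : LipschitzWith 1 (cl M) := by
    have h1 : LipschitzWith 1 (fun x : ℝ => max (-M) (min M x)) := by
      have := ((LipschitzWith.id (α := ℝ)).const_min M).const_max (-M)
      exact this
    have := (LipschitzWith.prod_fst (α := ℝ) (β := ℝ)).prodMk (h1.comp (LipschitzWith.prod_snd (α := ℝ) (β := ℝ)))
    rw [mul_one, max_self] at this
    exact this
  have hXL : LipschitzOnWith K (ham G) {p | |p.2| ≤ M} := by
    refine Convex.lipschitzOnWith_of_nnnorm_fderiv_le (𝕜 := ℝ) (fun p _ => (hX.differentiable (by norm_num)) p)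
      (fun p hp => hK p hp) ?_
    have : {p : ℝ × ℝ | |p.2| ≤ M} = Prod.snd ⁻¹' (Icc (-M) M) := by
      ext p; simp [abs_le]
    rw [this]
    exact (convex_Icc (-M) M).linear_preimage (LinearMap.snd ℝ ℝ ℝ)
  set V : ℝ × ℝ → ℝ × ℝ := fun p => ham G (cl M p) with hVdef
  have hVL : LipschitzWith (K * 1) V := by
    rw [← lipschitzOnWith_univ]
    exact hXL.comp hclL.lipschitzOnWith (fun p _ => hcl p)
  have hVB : ∀ p, ‖V p‖ ≤ B := fun p => hB _ (hcl p)
  have hVper : ∀ p k, V (p + tr k) = V p := by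
    intro p k
    have : cl M (p + tr k) = cl M p + tr k := by ext <;> simp [cl, tr]
    simp only [hVdef]
    rw [this, hXper]
  choose φ h0 hφ using exists_global hVL hVB
  have hcont : ∀ p, Continuous (φ p) := fun p => continuous_iff_continuousAt.mpr fun s => (hφ p s).continuousAt
  have hmem : ∀ p, G p = t → ∀ s, G (φ p s) = t := by
    intro p hp s
    have hcl : IsClopen {s | G (φ p s) = t} := by
      constructor
      · exact isClosed_eq (hG.continuous.comp (hcont p)) continuous_const
      · rw [isOpen_iff_mem_nhds]
        intro s hs
        have hU : IsOpen {u | |(φ p u).2| < M} :=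
          isOpen_lt (by have := hcont p; fun_prop) continuous_const
        obtain ⟨ε, hε, hball⟩ := Metric.isOpen_iff.mp hU s (hM _ hs)
        have hd : ∀ u ∈ Metric.ball s ε, HasDerivAt (fun u => G (φ p u)) 0 u := by
          intro u hu
          have h1 := (hG.differentiable (by norm_num) (φ p u)).hasFDerivAt.comp_hasDerivAt u (hφ p u)
          have e : fderiv ℝ G (φ p u) (V (φ p u)) = 0 := by
            simp only [hVdef]
            rw [hcleq _ (hball hu), fderiv_apply']
            simp [ham]; ring
          rw [e] at h1
          exact h1
        have hc : ∀ u ∈ Metric.ball s ε, G (φ p u) = G (φ p s) := fun u hu =>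
          Metric.isOpen_ball.is_const_of_deriv_eq_zero (𝕜 := ℝ) (s := Metric.ball s ε)
          (f := fun u => G (φ p u)) (convex_ball s ε).isPreconnected
          (fun u hu => (hd u hu).differentiableAt.differentiableWithinAt)
          (fun u hu => (hd u hu).deriv) hu (Metric.mem_ball_self hε)
        filter_upwards [Metric.ball_mem_nhds s hε] with u hu
        exact (hc u hu).trans hs
    have := hcl.eq_univ ⟨0, by simp [h0, hp]⟩
    show s ∈ {s | G (φ p s) = t}
    rw [this]; trivial
  refine ⟨φ, h0, hmem, hcont, ?_, ?_, ?_, ?_⟩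
  · intro p a s
    have := unique_global hVL (hφ (φ p a)) (d := fun s => φ p (a + s)) (fun s => by
      have := (hφ p (a + s)).comp_const_add a s
      exact this) 0 (by simp [h0])
    exact congrFun this s
  · intro p k s
    have := unique_global hVL (hφ (p + tr k)) (d := fun s => φ p s + tr k) (fun s => by
      rw [hVper]
      exact (hφ p s).add_const _) 0 (by simp [h0])
    exact congrFun this s
  · intro q hq ε hε
    have := flow_box hG hVL.continuous (hφ q) (hmem q hq) (by
      simp only [hVdef, h0]; rw [hcleq _ (hM q hq)]) (by rw [h0]; exact hreg q hq) hε
    rw [h0] at this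
    exact this
  · intro q hq
    have hVq : V q ≠ 0 := by
      intro h
      simp only [hVdef] at h
      rw [hcleq _ (hM q hq)] at h
      have h1 := congrArg Prod.fst h
      have h2 := congrArg Prod.snd h
      simp [ham] at h1 h2
      apply hreg q hq
      ext <;> simp [h1, h2]
    have h1 := hφ q 0
    rw [h0] at h1
    have h2 : ∀ᶠ s in 𝓝[≠] (0:ℝ), φ q s ≠ q := h1.eventually_ne hVq
    have h3 : ∀ᶠ s in 𝓝 (0:ℝ), dist (φ q s) q < 2 * Real.pi := by
      have := (hcont q).continuousAt (x := 0)
      rw [ContinuousAt, h0] at this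
      exact this.eventually (Metric.ball_mem_nhds q (by positivity))
    rw [eventually_nhdsWithin_iff] at h2
    obtain ⟨ε, hε, hb⟩ := Metric.eventually_nhds_iff.mp (h2.and h3)
    refine ⟨ε, hε, fun s hs hs' k hk => ?_⟩
    obtain ⟨h4, h5⟩ := hb (y := s) (by simp [abs_of_pos hs, hs'])
    have h4 := h4 hs.ne'
    have hk0 : k ≠ 0 := by
      rintro rfl
      rw [tr_zero, add_zero] at hk
      exact h4 hk
    rw [hk, dist_eq_norm, add_sub_cancel_left, tr, Prod.norm_mk] at h5
    have h6 := (le_max_left _ _).trans_lt h5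
    rw [Real.norm_eq_abs, abs_mul, abs_of_pos (by positivity : 0 < 2 * Real.pi)] at h6
    have : (1:ℝ) ≤ |(k:ℝ)| := by exact_mod_cast Int.one_le_abs hk0
    nlinarith [Real.pi_pos]

end CylPf
open Set Filter Topology

namespace CylPf

namespace FlowData

variable {S : Set (ℝ × ℝ)} {φ : ℝ × ℝ → ℝ → ℝ × ℝ}

lemma shift (H : FlowData S φ) {p : ℝ × ℝ} {a b : ℝ} {m : ℤ} (h : φ p a = φ p b + tr m) :
    φ p (a - b) = p + tr m := by
  have := congrArg (fun x => φ x (-b)) h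
  simp only [H.add, H.equi, add_neg_cancel, H.zero] at this
  rw [← this, sub_eq_add_neg]

lemma per (H : FlowData S φ) {p : ℝ × ℝ} {τ : ℝ} {m : ℤ} (h : φ p τ = p + tr m) (s : ℝ) :
    φ p (s + τ) = φ p s + tr m := by
  rw [add_comm, ← H.add, h, H.equi]

lemma recur (H : FlowData S φ) (hS : IsClosed S) (hper : ∀ p k, p ∈ S → p + tr k ∈ S)
    {M : ℝ} (hM : ∀ p ∈ S, |p.2| ≤ M) {p : ℝ × ℝ} (hp : p ∈ S) :
    ∃ τ > 0, ∃ w, φ p τ = p + tr w := by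
  choose k hk1 hk2 using fun n : ℕ => exists_tr (φ p n)
  obtain ⟨q, -, ψ, hψ, hq⟩ := ((isCompact_Icc (a := (0:ℝ)) (b := 2 * Real.pi)).prod
    (isCompact_Icc (a := -M) (b := M))).tendsto_subseq (x := fun n => φ p n + tr (k n)) (by
      intro n
      refine ⟨hk1 n, ?_⟩
      rw [hk2]
      exact abs_le.mp (hM _ (H.mem p hp n)))
  have hmem : ∀ n : ℕ, φ p n + tr (k n) ∈ S := fun n => hper _ _ (H.mem p hp n)
  have hqS : q ∈ S := hS.mem_of_tendsto hq (Eventually.of_forall fun n => hmem _)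
  have hev := hq.eventually (H.box q hqS (1/2) (by norm_num))
  obtain ⟨N, hN⟩ := eventually_atTop.mp hev
  obtain ⟨s, hs, e⟩ := hN N le_rfl (hmem _)
  obtain ⟨s', hs', e'⟩ := hN (N+1) (Nat.le_succ _) (hmem _)
  simp only [Function.comp] at e e'
  have hlt : (ψ N : ℝ) + 1 ≤ ψ (N+1) := by exact_mod_cast hψ (Nat.lt_succ_self N)
  have h1 : φ p (ψ (N+1)) + tr (k (ψ (N+1))) = φ p (ψ N + (s' - s)) + tr (k (ψ N)) := by
    rw [e', ← H.add, ← H.equi, e, H.add]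
    congr 1; ring
  have h2 : φ p (ψ (N+1)) = φ p (ψ N + (s' - s)) + tr (k (ψ N) - k (ψ (N+1))) := by
    rw [tr_sub, ← add_sub_assoc, ← h1, add_sub_cancel_right]
  refine ⟨_, ?_, _, H.shift h2⟩
  have := abs_lt.mp hs
  have := abs_lt.mp hs'
  linarith

lemma generator (H : FlowData S φ) (hS : IsClosed S) (hper : ∀ p k, p ∈ S → p + tr k ∈ S)
    {M : ℝ} (hM : ∀ p ∈ S, |p.2| ≤ M) {p : ℝ × ℝ} (hp : p ∈ S) :
    ∃ T > 0, ∃ w, φ p T = p + tr w ∧ ∀ τ v, φ p τ = p + tr v → ∃ k : ℤ, τ = k * T ∧ v = k * w := by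
  let A : AddSubgroup ℝ :=
    { carrier := {τ | ∃ w, φ p τ = p + tr w}
      zero_mem' := ⟨0, by rw [H.zero, tr_zero, add_zero]⟩
      add_mem' := by
        rintro a b ⟨v, hv⟩ ⟨w, hw⟩
        exact ⟨v + w, by rw [H.per hw, hv, tr_add, add_assoc]⟩
      neg_mem' := by
        rintro a ⟨v, hv⟩
        refine ⟨-v, ?_⟩
        have := H.shift (p := p) (a := 0) (b := a) (m := -v) (by
          rw [hv, H.zero, tr_neg]; simp)
        rwa [zero_sub] at this }
  obtain ⟨ε, hε, hinj⟩ := H.inj p hp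
  obtain ⟨b, hb⟩ := AddSubgroup.cyclic_of_isolated_zero (H := A) hε (by
    rw [Set.disjoint_left]
    rintro s ⟨w, hw⟩ ⟨h1, h2⟩
    exact hinj s h1 h2 w hw)
  obtain ⟨τ, hτ, w, hw⟩ := H.recur hS hper hM hp
  have hmul : ∀ T w, φ p T = p + tr w → ∀ k : ℤ, φ p (k * T) = p + tr (k * w) := by
    intro T w hT k
    induction k using Int.induction_on with
    | zero => simp [H.zero, tr_zero]
    | succ i ih =>
      have := H.per hT (i * T)
      have e : (((i:ℤ) + 1 : ℤ) : ℝ) * T = i * T + T := by push_cast; ring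
      rw [e, this]
      simp only [Int.cast_natCast] at ih
      rw [ih, add_mul, one_mul, tr_add, add_assoc]
    | pred i ih =>
      have := H.per hT ((-i - 1) * T)
      have e : ((-(i:ℤ) - 1 : ℤ) : ℝ) * T = (-i - 1) * T := by push_cast; ring
      rw [e, ← add_right_cancel_iff (a := tr w), ← this]
      have e2 : (-(i:ℝ) - 1) * T + T = (((-(i:ℤ)) : ℤ) : ℝ) * T := by push_cast; ring
      rw [e2, ih, add_assoc, ← tr_add]
      congr 2; ring
  have hbmem : ∀ x, x ∈ A ↔ ∃ k : ℤ, k • b = x := by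
    intro x; rw [hb, AddSubgroup.mem_closure_singleton]
  have hb0 : b ≠ 0 := by
    rintro rfl
    obtain ⟨k, hk⟩ := (hbmem τ).mp ⟨w, hw⟩
    simp at hk
    linarith
  have habs : |b| ∈ A := by
    rw [hbmem]
    rcases abs_choice b with h | h
    · exact ⟨1, by simp [h]⟩
    · exact ⟨-1, by simp [h]⟩
  obtain ⟨v₀, hv₀⟩ := habs
  refine ⟨|b|, abs_pos.mpr hb0, v₀, hv₀, ?_⟩
  intro τ v hv
  have : ∃ k : ℤ, τ = k * |b| := by
    obtain ⟨k, hk⟩ := (hbmem τ).mp ⟨v, hv⟩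
    rw [zsmul_eq_mul] at hk
    rcases abs_choice b with h | h
    · exact ⟨k, by rw [h, hk]⟩
    · exact ⟨-k, by rw [h, ← hk]; push_cast; ring⟩
  obtain ⟨k, hk⟩ := this
  refine ⟨k, hk, ?_⟩
  have := hmul _ _ hv₀ k
  rw [← hk, hv] at this
  exact tr_inj (add_left_cancel this)

/-- If every closed orbit is inessential, there is a locally constant equivariant integer function -/
lemma exists_index (H : FlowData S φ) (hper : ∀ p k, p ∈ S → p + tr k ∈ S)
    (hno : ∀ p ∈ S, ∀ τ w, φ p τ = p + tr w → w = 0) :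
    ∃ n : ℝ × ℝ → ℤ, (∀ p ∈ S, ∀ k, n (p + tr k) = n p + k) ∧
      ∀ p ∈ S, ∀ᶠ q in 𝓝 p, q ∈ S → n q = n p := by
  let R : Setoid (ℝ × ℝ) :=
    { r := fun p q => ∃ s k, q = φ p s + tr k
      iseqv := by
        refine ⟨fun p => ⟨0, 0, by rw [H.zero, tr_zero, add_zero]⟩, ?_, ?_⟩
        · rintro p q ⟨s, k, rfl⟩
          refine ⟨-s, -k, ?_⟩
          rw [H.equi, H.add, add_neg_cancel, H.zero, tr_neg, add_neg_cancel_right]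
        · rintro p q r ⟨s, k, rfl⟩ ⟨s', k', rfl⟩
          exact ⟨s + s', k + k', by rw [H.equi, H.add, tr_add, add_assoc]⟩ }
  let ρ : ℝ × ℝ → ℝ × ℝ := fun p => (Quotient.mk R p).out
  have hρ : ∀ p, ∃ s k, p = φ (ρ p) s + tr k := fun p => Quotient.exact (Quotient.out_eq (Quotient.mk R p))
  have hρS : ∀ p ∈ S, ρ p ∈ S := by
    intro p hp
    obtain ⟨s, k, h⟩ := R.symm (hρ p)
    rw [h]
    exact hper _ _ (H.mem _ hp _)
  choose σ n hn using hρ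
  have hkey : ∀ p ∈ S, ∀ s k, n (φ p s + tr k) = n p + k := by
    intro p hp s k
    have e : ρ (φ p s + tr k) = ρ p := by
      have : Quotient.mk R (φ p s + tr k) = Quotient.mk R p :=
        Quotient.sound (R.symm ⟨s, k, rfl⟩)
      simp only [ρ, this]
    have h1 := hn (φ p s + tr k)
    rw [e] at h1
    have h2 : φ p s = φ (ρ p) (σ p + s) + tr (n p) := by
      conv_lhs => rw [hn p]
      rw [H.equi, H.add]
    set m := n (φ p s + tr k)
    set b := σ (φ p s + tr k)
    have h1' : φ (ρ p) (σ p + s) + tr (n p + k) = φ (ρ p) b + tr m := by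
      rw [tr_add, ← add_assoc, ← h2]; exact h1
    have h3 : φ (ρ p) (σ p + s) = φ (ρ p) b + tr (m - (n p + k)) := by
      rw [tr_sub, ← add_sub_assoc, ← h1', add_sub_cancel_right]
    have := hno _ (hρS p hp) _ _ (H.shift h3)
    linarith
  refine ⟨n, ?_, ?_⟩
  · intro p hp k
    have := hkey p hp 0 k
    rwa [H.zero] at this
  · intro p hp
    filter_upwards [H.box p hp 1 one_pos] with q hq hqS
    obtain ⟨s, -, rfl⟩ := hq hqS
    have := hkey p hp s 0
    rwa [tr_zero, add_zero, add_zero] at this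

end FlowData

lemma const_of_exp {X : Type*} [TopologicalSpace X] [PreconnectedSpace X] {h : X → ℂ}
    (hc : Continuous h) (he : ∀ x, Complex.exp (h x) = 1) (x y : X) : h x = h y :=
  Complex.isCoveringMap_exp.const_of_comp hc (fun a b => Subtype.ext (by simp [he])) x y

/-- The index function cannot exist. -/
lemma index_absurd {G : ℝ × ℝ → ℝ} (hG : Continuous G) (hGper : ∀ p k, G (p + tr k) = G p)
    {t : ℝ} {zlo zhi : ℝ} (hlo : ∀ x, G (x, zlo) < t) (hhi : ∀ x, t < G (x, zhi))
    {n : ℝ × ℝ → ℤ} (hn : ∀ p, G p = t → ∀ k, n (p + tr k) = n p + k)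
    (hn' : ∀ p, G p = t → ∀ᶠ q in 𝓝 p, G q = t → n q = n p) : False := by
  have hpi := Real.pi_pos
  set L : Set Z := pr '' {p | G p = t} with hL
  have hpre : pr ⁻¹' L = {p | G p = t} := by
    ext p
    constructor
    · rintro ⟨q, hq, h⟩
      obtain ⟨k, rfl⟩ := pr_eq_iff.mp h.symm
      show G _ = t
      rw [hGper]; exact hq
    · intro h; exact ⟨p, h, rfl⟩
  have hLc : IsClosed L := by
    rw [← isOpen_compl_iff]
    have : Lᶜ = pr '' {p | G p = t}ᶜ := by
      rw [← hpre, ← preimage_compl, image_preimage_eq _ pr_surj]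
    rw [this]
    exact isOpenMap_pr _ (isClosed_eq hG continuous_const).isOpen_compl
  let σ := Function.surjInv pr_surj
  let g : Z → ℝ := fun z => n (σ z) - (σ z).1 / (2 * Real.pi)
  have hg : ∀ q, G q = t → g (pr q) = n q - q.1 / (2 * Real.pi) := by
    intro q hq
    obtain ⟨k, hk⟩ := pr_eq_iff.mp (Function.surjInv_eq pr_surj (pr q))
    have hk : σ (pr q) = q + tr k := hk
    simp only [g, hk]
    rw [hn q hq]
    simp [tr]
    field_simp
    ring
  have hgc : ContinuousOn g L := by
    rintro z ⟨q, hq, rfl⟩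
    have e : 𝓝[L] (pr q) = map pr (𝓝[{p | G p = t}] q) := by
      rw [nhdsWithin, nhdsWithin, nhds_pr, ← hpre, map_inf_principal_preimage]
    rw [ContinuousWithinAt, e, tendsto_map'_iff, hg q hq]
    have h1 : Tendsto (fun p : ℝ × ℝ => (n q : ℝ) - p.1 / (2 * Real.pi)) (𝓝[{p | G p = t}] q)
        (𝓝 (n q - q.1 / (2 * Real.pi))) := by
      have : Continuous (fun p : ℝ × ℝ => (n q : ℝ) - p.1 / (2 * Real.pi)) := by fun_prop
      exact this.continuousAt.continuousWithinAt
    refine h1.congr' ?_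
    filter_upwards [nhdsWithin_le_nhds (hn' q hq), self_mem_nhdsWithin] with p hp hp'
    simp only [Function.comp]
    rw [hg p hp', hp hp']
  obtain ⟨g', hg'⟩ := ContinuousMap.exists_extension' hLc.isClosedEmbedding_subtypeVal
    ⟨_, hgc.domRestrict⟩
  have hg'' : ∀ q, G q = t → g' (pr q) = n q - q.1 / (2 * Real.pi) := by
    intro q hq
    rw [← hg q hq]
    exact congrFun hg' ⟨pr q, q, hq, rfl⟩
  have hprc := continuous_pr
  let h : ℝ × ℝ → ℂ := fun q => ((2 * Real.pi * g' (pr q) + q.1 : ℝ) : ℂ) * Complex.I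
  have hhc : Continuous h := by
    have : Continuous (fun q => g' (pr q)) := g'.continuous.comp hprc
    simp only [h]
    fun_prop
  have hh1 : ∀ q, h (q + tr 1) = h q + 2 * Real.pi * Complex.I := by
    intro q
    simp only [h, pr_tr]
    simp [tr]
    ring
  let K : ℝ × ℝ → ℂ := fun q => if t ≤ G q then Complex.exp (h q) else 1
  have hKc : Continuous K := by
    refine Continuous.if_le (by fun_prop) continuous_const continuous_const hG ?_
    intro q hq
    have e : h q = n q * (2 * Real.pi * Complex.I) := by
      simp only [h]
      rw [hg'' q hq.symm]
      push_cast
      have : (Real.pi : ℂ) ≠ 0 := by exact_mod_cast hpi.ne'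
      field_simp
      ring
    rw [e, Complex.exp_int_mul_two_pi_mul_I]
  obtain ⟨l, hl⟩ := exists_log ⟨K, hKc⟩ (by
    intro q
    simp only [K, ContinuousMap.coe_mk]
    split_ifs <;> simp)
  have hl : ∀ q, Complex.exp (l q) = K q := hl
  have hK1 : ∀ q, K (q + tr 1) = K q := by
    intro q
    simp only [K, hGper, hh1]
    rw [Complex.exp_add, Complex.exp_two_pi_mul_I, mul_one]
  have hm := const_of_exp (h := fun q => l (q + tr 1) - l q) (by fun_prop) (by
    intro q
    rw [Complex.exp_sub, hl, hl, hK1, ← hl, div_self (Complex.exp_ne_zero _)])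
    (0, zlo) (0, zhi)
  have e1 : ∀ z, ((0, z) : ℝ × ℝ) + tr 1 = (2 * Real.pi, z) := by intro z; simp [tr]
  simp only [e1] at hm
  have hlow := const_of_exp (h := fun x : ℝ => l (x, zlo)) (by fun_prop) (by
    intro x
    rw [hl]
    simp [K, hlo]) (2 * Real.pi) 0
  have hhigh := const_of_exp (h := fun x : ℝ => l (x, zhi) - h (x, zhi)) (by fun_prop) (by
    intro x
    rw [Complex.exp_sub, hl]
    simp [K, (hhi x).le]) (2 * Real.pi) 0
  have e2 := hh1 (0, zhi)
  rw [e1] at e2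
  rw [e2, sub_eq_sub_iff_add_eq_add] at hhigh
  rw [hlow, sub_self] at hm
  have : (2 * Real.pi * Complex.I : ℂ) = 0 := by
    have h3 : l (2 * Real.pi, zhi) = l (0, zhi) := (sub_eq_zero.mp hm.symm)
    rw [h3] at hhigh
    have := add_left_cancel hhigh
    exact left_eq_add.mp this
  simp [hpi.ne'] at this

end CylPf
open Set Filter Topology

namespace CylPf

lemma fderiv_lift_ne {F : ℝ × ℝ × ℝ → ℝ} (hF : Differentiable ℝ F) (q : ℝ × ℝ)
    (h : ∃ v : ℝ × ℝ × ℝ,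
        fderiv ℝ (fun q : ℝ × ℝ × ℝ => q.1 ^ 2 + q.2.1 ^ 2) (Real.cos q.1, Real.sin q.1, q.2) v = 0 ∧
        fderiv ℝ F (Real.cos q.1, Real.sin q.1, q.2) v ≠ 0) :
    fderiv ℝ (fun q : ℝ × ℝ => F (Real.cos q.1, Real.sin q.1, q.2)) q ≠ 0 := by
  obtain ⟨v, hv, hne⟩ := h
  have h1 : HasFDerivAt (fun q : ℝ × ℝ × ℝ => q.1 ^ 2 + q.2.1 ^ 2)
      ((2 * Real.cos q.1) • ContinuousLinearMap.fst ℝ ℝ (ℝ × ℝ) + (2 * Real.sin q.1) •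
        (ContinuousLinearMap.fst ℝ ℝ ℝ).comp (ContinuousLinearMap.snd ℝ ℝ (ℝ × ℝ)))
        (Real.cos q.1, Real.sin q.1, q.2) := by
    have a := (hasFDerivAt_fst (𝕜 := ℝ) (E := ℝ) (F := ℝ × ℝ)
      (p := (Real.cos q.1, Real.sin q.1, q.2))).pow 2
    have b := ((hasFDerivAt_fst (𝕜 := ℝ) (E := ℝ) (F := ℝ) (p := (Real.sin q.1, q.2))).comp
      (Real.cos q.1, Real.sin q.1, q.2) (hasFDerivAt_snd (𝕜 := ℝ) (E := ℝ) (F := ℝ × ℝ)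
      (p := (Real.cos q.1, Real.sin q.1, q.2)))).pow 2
    refine (a.add b).congr_fderiv ?_
    ext <;> simp
  rw [h1.fderiv] at hv
  simp at hv
  have hp : HasFDerivAt (fun q : ℝ × ℝ => (Real.cos q.1, Real.sin q.1, q.2))
      (((-Real.sin q.1) • ContinuousLinearMap.fst ℝ ℝ ℝ).prod
        (((Real.cos q.1) • ContinuousLinearMap.fst ℝ ℝ ℝ).prod (ContinuousLinearMap.snd ℝ ℝ ℝ))) q := by
    refine HasFDerivAt.prodMk ?_ (HasFDerivAt.prodMk ?_ hasFDerivAt_snd)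
    · exact (Real.hasDerivAt_cos q.1).comp_hasFDerivAt q hasFDerivAt_fst
    · exact (Real.hasDerivAt_sin q.1).comp_hasFDerivAt q hasFDerivAt_fst
  have h2 := (hF (Real.cos q.1, Real.sin q.1, q.2)).hasFDerivAt.comp q hp
  have h2 : HasFDerivAt (fun q : ℝ × ℝ => F (Real.cos q.1, Real.sin q.1, q.2)) _ q := h2
  rw [h2.fderiv]
  intro h0
  apply hne
  have h3 := congrArg (fun L : ℝ × ℝ →L[ℝ] ℝ => L (-Real.sin q.1 * v.1 + Real.cos q.1 * v.2.1, v.2.2)) h0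
  simp at h3
  rw [← h3]
  congr 1
  have hcs := Real.sin_sq_add_cos_sq q.1
  ext
  · simp; linear_combination (-v.1) * hcs + Real.cos q.1 / 2 * hv
  · simp; linear_combination (-v.2.1) * hcs + Real.sin q.1 / 2 * hv
  · simp

lemma FlowData.unit_winding {S : Set (ℝ × ℝ)} {φ : ℝ × ℝ → ℝ → ℝ × ℝ} (H : FlowData S φ)
    {p : ℝ × ℝ} {T : ℝ} (hT : 0 < T) {w : ℤ} (hw0 : w ≠ 0) (hw : φ p T = p + tr w)
    (hgen : ∀ τ v, φ p τ = p + tr v → ∃ k : ℤ, τ = k * T ∧ v = k * w) : w * w = 1 := by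
  have key : ∃ a b, φ p a = φ p b + tr 1 := by
    rcases lt_or_gt_of_ne hw0 with h | h
    · obtain ⟨s, u, hsu⟩ := hopf (c := fun s => φ p (-s)) ((H.cont p).comp continuous_neg) hT
        (w := -w) (by omega) (by
          intro s
          have := H.per hw (-(s + T))
          rw [show -(s + T) + T = -s by ring] at this
          simp only [this, tr_neg]
          abel)
      exact ⟨_, _, hsu⟩
    · obtain ⟨s, u, hsu⟩ := hopf (H.cont p) hT (w := w) (by omega) (H.per hw)
      exact ⟨_, _, hsu⟩
  obtain ⟨a, b, hab⟩ := key
  obtain ⟨k, -, hk⟩ := hgen _ _ (H.shift hab)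
  rcases Int.eq_one_or_neg_one_of_mul_eq_one (by rw [mul_comm]; exact hk.symm : w * k = 1) with h | h <;> simp [h]

end CylPf

/-- Let `Z = {(x,y,z) ∈ ℝ³ : x² + y² = 1}` be the cylinder and `F` a smooth
function on `ℝ³` whose restriction `f` to `Z` is proper (tending to `±∞` as
`z → ±∞` uniformly).  For any regular value `t` of `f`, the level set `f⁻¹(t)`
has a connected component which is a simple closed curve generating `π₁(Z)`. -/
theorem level_set_component_generates_cylinder_pi1
    (F : ℝ × ℝ × ℝ → ℝ) (hF : ContDiff ℝ (⊤ : ℕ∞) F)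
    (htop : Filter.Tendsto (fun p : {p : ℝ × ℝ × ℝ // p.1 ^ 2 + p.2.1 ^ 2 = 1} => F ↑p)
      (Filter.comap (fun p : {p : ℝ × ℝ × ℝ // p.1 ^ 2 + p.2.1 ^ 2 = 1} => (↑p : ℝ × ℝ × ℝ).2.2)
        Filter.atTop) Filter.atTop)
    (hbot : Filter.Tendsto (fun p : {p : ℝ × ℝ × ℝ // p.1 ^ 2 + p.2.1 ^ 2 = 1} => F ↑p)
      (Filter.comap (fun p : {p : ℝ × ℝ × ℝ // p.1 ^ 2 + p.2.1 ^ 2 = 1} => (↑p : ℝ × ℝ × ℝ).2.2)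
        Filter.atBot) Filter.atBot)
    (t : ℝ)
    (hreg : ∀ p : {p : ℝ × ℝ × ℝ // p.1 ^ 2 + p.2.1 ^ 2 = 1}, F ↑p = t →
      ∃ v : ℝ × ℝ × ℝ,
        fderiv ℝ (fun q : ℝ × ℝ × ℝ => q.1 ^ 2 + q.2.1 ^ 2) ↑p v = 0 ∧
        fderiv ℝ F ↑p v ≠ 0) :
    ∃ (p : {p : ℝ × ℝ × ℝ // p.1 ^ 2 + p.2.1 ^ 2 = 1}) (γ : Path p p),
      F ↑p = t ∧
      (∀ s : unitInterval, F ↑(γ s) = t) ∧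
      (∀ s u : unitInterval, γ s = γ u →
        s = u ∨ (s = 0 ∧ u = 1) ∨ (s = 1 ∧ u = 0)) ∧
      Set.range (fun s : unitInterval => γ s)
        = connectedComponentIn {z : {p : ℝ × ℝ × ℝ // p.1 ^ 2 + p.2.1 ^ 2 = 1} | F ↑z = t} p ∧
      Subgroup.zpowers
        (FundamentalGroup.fromPath
          (X := TopCat.of {p : ℝ × ℝ × ℝ // p.1 ^ 2 + p.2.1 ^ 2 = 1}) ⟦γ⟧) = ⊤ := by
  classical
  have hprc := CylPf.continuous_pr
  set G : ℝ × ℝ → ℝ := fun q => F (Real.cos q.1, Real.sin q.1, q.2) with hGdef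
  have hGF : ∀ q, F (CylPf.pr q : ℝ × ℝ × ℝ) = G q := fun q => rfl
  have hF2 : ContDiff ℝ 2 F := (contDiff_infty.mp hF) 2
  have hG : ContDiff ℝ 2 G := by
    refine hF2.comp (ContDiff.prodMk ?_ (ContDiff.prodMk ?_ contDiff_snd))
    · exact Real.contDiff_cos.comp contDiff_fst
    · exact Real.contDiff_sin.comp contDiff_fst
  have hGper : ∀ p k, G (p + CylPf.tr k) = G p := by
    intro p k
    rw [← hGF, ← hGF, CylPf.pr_tr]
  obtain ⟨M₁, hM₁⟩ : ∃ M, ∀ z ≥ M, ∀ x, t < G (x, z) := by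
    have h := Filter.eventually_comap.mp (htop.eventually (Filter.eventually_gt_atTop t))
    obtain ⟨M, hM⟩ := Filter.eventually_atTop.mp h
    exact ⟨M, fun z hz x => hM z hz (CylPf.pr (x, z)) rfl⟩
  obtain ⟨M₂, hM₂⟩ : ∃ M, ∀ z ≤ M, ∀ x, G (x, z) < t := by
    have h := Filter.eventually_comap.mp (hbot.eventually (Filter.eventually_lt_atBot t))
    obtain ⟨M, hM⟩ := Filter.eventually_atBot.mp h
    exact ⟨M, fun z hz x => hM z hz (CylPf.pr (x, z)) rfl⟩
  set M := max M₁ (-M₂) with hMdef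
  have hM : ∀ p, G p = t → |p.2| < M := by
    intro p hp
    rw [abs_lt]
    constructor
    · by_contra hc
      have h1 : p.2 ≤ M₂ := by linarith [le_max_right M₁ (-M₂)]
      have := hM₂ p.2 h1 p.1
      exact this.ne hp
    · by_contra hc
      have h1 : M₁ ≤ p.2 := by linarith [le_max_left M₁ (-M₂)]
      have := hM₁ p.2 h1 p.1
      exact this.ne' hp
  have hGreg : ∀ p, G p = t → fderiv ℝ G p ≠ 0 := fun p hp =>
    CylPf.fderiv_lift_ne (hF2.differentiable (by norm_num)) p (hreg (CylPf.pr p) hp)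
  obtain ⟨φ, H⟩ := CylPf.exists_flow hG hGper hM hGreg
  set S : Set (ℝ × ℝ) := {p | G p = t} with hS
  have hSc : IsClosed S := isClosed_eq hG.continuous continuous_const
  have hSper : ∀ p k, p ∈ S → p + CylPf.tr k ∈ S := by
    intro p k hp
    show G _ = t
    rw [hGper]; exact hp
  have hess : ∃ p ∈ S, ∃ τ w, φ p τ = p + CylPf.tr w ∧ w ≠ 0 := by
    by_contra hc
    push Not at hc
    obtain ⟨n, hn, hn'⟩ := H.exists_index hSper hc
    exact CylPf.index_absurd hG.continuous hGper (hM₂ M₂ le_rfl) (hM₁ M₁ le_rfl) hn hn'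
  obtain ⟨p, hp, τ, w', hτ, hw'⟩ := hess
  obtain ⟨T, hT, w, hw, hgen⟩ := H.generator hSc hSper (fun p hp => (hM p hp).le) hp
  have hw0 : w ≠ 0 := by
    rintro rfl
    obtain ⟨k, -, hk⟩ := hgen _ _ hτ
    simp at hk
    exact hw' hk
  have hww := H.unit_winding hT hw0 hw hgen
  have hφc := H.cont p
  let γ : Path (CylPf.pr p) (CylPf.pr p) :=
    { toFun := fun s => CylPf.pr (φ p (s * T))
      continuous_toFun := by fun_prop
      source' := by simp [H.zero]
      target' := by simp [hw, CylPf.pr_tr] }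
  have hγ : ∀ s, γ s = CylPf.pr (φ p (s * T)) := fun s => rfl
  have hγt : ∀ s : unitInterval, F ↑(γ s) = t := fun s => H.mem p hp _
  have hrange : ∀ s, CylPf.pr (φ p s) ∈ Set.range (fun s : unitInterval => γ s) := by
    intro s
    obtain ⟨k, hk, -⟩ : ∃ k : ℤ, s - k * T ∈ Set.Ico 0 T ∧ True := by
      refine ⟨toIcoDiv hT 0 s, ?_, trivial⟩
      have := sub_toIcoDiv_zsmul_mem_Ico hT 0 s
      rwa [zsmul_eq_mul, zero_add] at this
    have hmul : ∀ k : ℤ, ∀ s, CylPf.pr (φ p (s + k * T)) = CylPf.pr (φ p s) := by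
      have h1 : ∀ s, CylPf.pr (φ p (s + T)) = CylPf.pr (φ p s) := fun s => by
        rw [H.per hw, CylPf.pr_tr]
      have hP : Function.Periodic (fun s => CylPf.pr (φ p s)) T := h1
      intro k s
      exact hP.int_mul k s
    refine ⟨⟨(s - k * T) / T, div_nonneg hk.1 hT.le, (div_le_one hT).mpr hk.2.le⟩, ?_⟩
    have h2 := hmul k (s - k * T)
    rw [sub_add_cancel] at h2
    simp only [hγ]
    rw [div_mul_cancel₀ _ hT.ne', h2]
  refine ⟨CylPf.pr p, γ, hp, hγt, ?_, ?_, ?_⟩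
  · intro s u hsu
    obtain ⟨k, hk⟩ := CylPf.pr_eq_iff.mp hsu
    obtain ⟨j, hj, -⟩ := hgen _ _ (H.shift hk)
    have hj' : (s : ℝ) - u = j := by
      have : ((s : ℝ) - u) * T = j * T := by rw [← hj]; ring
      exact mul_right_cancel₀ hT.ne' this
    have hs0 := s.2.1
    have hs1 := s.2.2
    have hu0 := u.2.1
    have hu1 := u.2.2
    have hj1 : j ≤ 1 := by
      have : (j : ℝ) ≤ 1 := by linarith
      exact_mod_cast this
    have hj2 : -1 ≤ j := by
      have : (-1 : ℝ) ≤ j := by linarith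
      exact_mod_cast this
    have : j = -1 ∨ j = 0 ∨ j = 1 := by omega
    rcases this with rfl | rfl | rfl
    · push_cast at hj'
      refine Or.inr (Or.inl ⟨Subtype.ext ?_, Subtype.ext ?_⟩)
      · show (s : ℝ) = 0
        linarith
      · show (u : ℝ) = 1
        linarith
    · push_cast at hj'
      exact Or.inl (Subtype.ext (by linarith))
    · push_cast at hj'
      refine Or.inr (Or.inr ⟨Subtype.ext ?_, Subtype.ext ?_⟩)
      · show (s : ℝ) = 1
        linarith
      · show (u : ℝ) = 0
        linarith
  · set L := {z : {p : ℝ × ℝ × ℝ // p.1 ^ 2 + p.2.1 ^ 2 = 1} | F ↑z = t} with hL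
    set R := Set.range (fun s : unitInterval => γ s) with hR
    have hpR : CylPf.pr p ∈ R := ⟨0, γ.source⟩
    have hpL : CylPf.pr p ∈ L := hp
    have hRcon : IsPreconnected R := isPreconnected_range γ.continuous
    have hRcl : IsClosed R := (isCompact_range γ.continuous).isClosed
    apply Set.Subset.antisymm
    · exact hRcon.subset_connectedComponentIn hpR (by rintro _ ⟨s, rfl⟩; exact hγt s)
    · have hU : R ⊆ interior (R ∪ Lᶜ) := by
        rintro _ ⟨s, rfl⟩
        rw [mem_interior_iff_mem_nhds]
        show R ∪ Lᶜ ∈ nhds (γ s)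
        rw [hγ, CylPf.nhds_pr, Filter.mem_map]
        filter_upwards [H.box _ (H.mem p hp (s * T)) 1 one_pos] with q hq
        by_cases hqS : q ∈ S
        · obtain ⟨r, -, rfl⟩ := hq hqS
          left
          rw [H.add]
          exact hrange _
        · exact Or.inr hqS
      have hV : IsOpen Rᶜ := hRcl.isOpen_compl
      have hC := (isPreconnected_connectedComponentIn (F := L) (x := CylPf.pr p))
      have hCL := connectedComponentIn_subset L (CylPf.pr p)
      have hsub : connectedComponentIn L (CylPf.pr p) ∩ interior (R ∪ Lᶜ) ⊆ R := by
        rintro z ⟨hz, hz'⟩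
        rcases interior_subset hz' with h | h
        · exact h
        · exact absurd (hCL hz) h
      intro z hz
      by_contra hzR
      obtain ⟨y, hy, hy1, hy2⟩ := hC _ _ isOpen_interior hV (by
          intro y hy
          by_cases h : y ∈ R
          · exact Or.inl (hU h)
          · exact Or.inr h) ⟨_, mem_connectedComponentIn hpL, hU hpR⟩ ⟨z, hz, hzR⟩
      exact hy2 (hsub ⟨hy, hy1⟩)
  · exact CylPf.gen p γ ⟨fun s => φ p (s * T), by fun_prop⟩ (fun s => rfl) w (by simp [H.zero])
      (by simp [hw]) hww
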